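/- arXiv:1109.1344 — 8 statements merged into one kernel-verified Lean document; each statement's English description precedes it below -/
import Mathlib

section
/- Let A be a finite-dimensional left-symmetric algebra over a field k and d : A* → A a linear isomorphism such that the bilinear form B_d(x,y) := ⟨d⁻¹(x), y⟩ on A is skew-symmetric. Then the following are equivalent: (1) d(L*_x f) = [x, d f] for all x ∈ A, f ∈ A*, and L*_{d f} g + L*_{d g} f = 0 for all f,g ∈ A* (these are exactly the conditions making (g(A), A*, d, [·,·]_s) a strict Lie 2-algebra); (2) B_d is invariant, i.e. B_d(x∘y, z) = B_d(x∘z − z∘x, y) for all x,y,z ∈ A. -/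
/-! Write `B x y = d.symm x y`. Substituting `f = d.symm y` and pairing with `z`, the identity
`d (L*_x f) = [x, d f]` reads `-B(y, x∘z) = B([x,y], z)`, which by skew-symmetry is precisely
invariance, `B(x∘z, y) = B([x,y], z)`. The remaining condition
`L*_{d f} g + L*_{d g} f = 0` reads `B(u∘z, v) + B(v∘z, u) = 0`, and follows from invariance because
the two terms are `B([u,v], z)` and `B([v,u], z)`. -/

/-- The dual left-multiplication operator `L*_x` of a left-symmetric algebra,
`⟨L*_x f, y⟩ = −⟨f, x∘y⟩`. -/
noncomputable def Ldual {k : Type*} [Field k] {A : Type*} [AddCommGroup A] [Module k A]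
    (mul : A →ₗ[k] A →ₗ[k] A) (x : A) (f : Module.Dual k A) : Module.Dual k A :=
  -(f ∘ₗ mul x)

/-- Let `A` be a finite-dimensional left-symmetric algebra and
`d : A* → A` a linear isomorphism such that `B_d(x,y) := ⟨d⁻¹ x, y⟩` is skew-symmetric.
Then `d(L*_x f) = [x, d f]` (for all `x, f`) together with `L*_{d f} g + L*_{d g} f = 0`
(for all `f, g`) — the conditions making `(g(A), A*, d, [·,·]_s)` a strict Lie 2-algebra —
hold if and only if `B_d` is invariant: `B_d(x∘y, z) = B_d(x∘z − z∘x, y)`. -/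
theorem strictLie2_iff_invariant
    {k : Type*} [Field k] {A : Type*} [AddCommGroup A] [Module k A]
    [FiniteDimensional k A]
    (mul : A →ₗ[k] A →ₗ[k] A)
    (hls : ∀ x y z : A,
      mul (mul x y) z - mul x (mul y z) = mul (mul y x) z - mul y (mul x z))
    (d : Module.Dual k A ≃ₗ[k] A)
    (hBskew : ∀ x y : A, d.symm x y = - d.symm y x) :
    ((∀ (x : A) (f : Module.Dual k A),
        d (Ldual mul x f) = mul x (d f) - mul (d f) x) ∧
     (∀ f g : Module.Dual k A, Ldual mul (d f) g + Ldual mul (d g) f = 0))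
    ↔ (∀ x y z : A, d.symm (mul x y) z = d.symm (mul x z - mul z x) y) := by
  constructor
  · rintro ⟨h, -⟩ x y z
    have h1 : Ldual mul x (d.symm z) = d.symm (mul x z - mul z x) := by
      rw [LinearEquiv.eq_symm_apply, h, LinearEquiv.apply_symm_apply]
    rw [← h1, hBskew]
    simp [Ldual]
  · intro h
    constructor
    · intro x f
      rw [← LinearEquiv.eq_symm_apply]
      ext z
      rw [← h, hBskew]
      simp [Ldual]
    · intro f g
      ext z
      -- The two terms, as values of `B`.
      have h1 := hBskew (mul (d f) z) (d g)
      have h2 := hBskew (mul (d g) z) (d f)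
      rw [h] at h1 h2
      simp only [map_sub, LinearMap.sub_apply, LinearEquiv.symm_apply_apply] at h1 h2
      simp only [Ldual, LinearMap.add_apply, LinearMap.neg_apply, LinearMap.comp_apply,
        LinearMap.zero_apply]
      rw [← h1, ← h2]
      ring
end

section
/- Let (h, [·,·]) be a finite-dimensional Lie algebra over a field k and ω a nondegenerate skew-symmetric bilinear form on h which is a 2-cocycle (so (h,ω) is a symplectic Lie algebra). Then there is a unique bilinear product ∘ on h satisfying ω(x∘y, z) = −ω(y, [x,z]) for all x,y,z ∈ h; this product is left-symmetric, i.e. (x∘y)∘z − x∘(y∘z) = (y∘x)∘z − y∘(x∘z), and its commutator recovers the Lie bracket: x∘y − y∘x = [x,y] for all x,y ∈ h. -/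
/-!
Finite dimensionality and nondegeneracy make `y ↦ ω y` an isomorphism `e : L ≃ Dual k L`, so the
defining identity forces, and is solved by, `x ∘ y = -e⁻¹ (ω y ∘ ad x)`. In other words the left
multiplication by `x` is the coadjoint action of `x` transported to `L` along `e`.
All remaining identities are tested by pairing with `ω`. The commutator identity is the cocycle
condition together with skew-symmetry. Given it, left-symmetry says that left multiplication sends
`⁅x, y⁆` to the commutator of the left multiplications by `x` and `y`, which is the Jacobi identity.
-/


/-- Let `(h, [·,·])` be a finite-dimensional Lie algebra over a field `k`
and `ω` a nondegenerate skew-symmetric bilinear 2-cocycle on `h` (so `(h, ω)` is a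
symplectic Lie algebra).  Then there is a unique bilinear product `∘` on `h` with
`ω(x∘y, z) = −ω(y, [x,z])`; any such product is left-symmetric and its commutator
recovers the Lie bracket. -/
theorem symplectic_gives_leftSymmetric
    {k : Type*} [Field k] {L : Type*} [LieRing L] [LieAlgebra k L]
    [FiniteDimensional k L]
    (ω : L →ₗ[k] L →ₗ[k] k)
    (hskew : ∀ x y : L, ω x y = - ω y x)
    (hnd : ∀ x : L, (∀ y : L, ω x y = 0) → x = 0)
    (hcocycle : ∀ x y z : L, ω ⁅x, y⁆ z + ω ⁅y, z⁆ x + ω ⁅z, x⁆ y = 0) :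
    (∃! mul : L →ₗ[k] L →ₗ[k] L, ∀ x y z : L, ω (mul x y) z = - ω y ⁅x, z⁆) ∧
    (∀ mul : L →ₗ[k] L →ₗ[k] L, (∀ x y z : L, ω (mul x y) z = - ω y ⁅x, z⁆) →
      ((∀ x y z : L,
          mul (mul x y) z - mul x (mul y z) = mul (mul y x) z - mul y (mul x z)) ∧
       (∀ x y : L, mul x y - mul y x = ⁅x, y⁆))) := by
  have ext_left : ∀ a b : L, (∀ z, ω a z = ω b z) → a = b := fun a b h =>
    sub_eq_zero.mp (hnd _ fun z => by simp [h z])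
  refine ⟨?_, ?_⟩
  · have hinj : Function.Injective ω := fun a b h => ext_left a b fun z => by rw [h]
    let e : L ≃ₗ[k] Module.Dual k L :=
      LinearMap.linearEquivOfInjective ω hinj Subspace.dual_finrank_eq.symm
    have he : ∀ (f : Module.Dual k L) (z : L), ω (e.symm f) z = f z := fun f z =>
      LinearMap.congr_fun (e.apply_symm_apply f) z
    refine ⟨LinearMap.mk₂ k (fun x y => -e.symm ((ω y).comp (LieAlgebra.ad k L x)))
      ?_ ?_ ?_ ?_, ?_, ?_⟩
    · intro x x' y
      refine ext_left _ _ fun z => ?_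
      simp [he, add_comm]
    · intro c x y
      refine ext_left _ _ fun z => ?_
      simp [he]
    · intro x y y'
      refine ext_left _ _ fun z => ?_
      simp [he, add_comm]
    · intro c x y
      refine ext_left _ _ fun z => ?_
      simp [he]
    · intro x y z
      simp [he]
    · intro mul hmul
      refine LinearMap.ext₂ fun x y => ext_left _ _ fun z => ?_
      simp [he, hmul]
  · intro mul hmul
    have hcomm : ∀ x y : L, mul x y - mul y x = ⁅x, y⁆ := by
      intro x y
      refine ext_left _ _ fun z => ?_
      have hc := hcocycle x y z
      rw [hskew ⁅y, z⁆ x, hskew ⁅z, x⁆ y, ← lie_skew z x, map_neg] at hc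
      rw [map_sub, LinearMap.sub_apply, hmul, hmul]
      linear_combination -hc
    refine ⟨fun x y z => ?_, hcomm⟩
    have hrep : mul ⁅x, y⁆ z = mul x (mul y z) - mul y (mul x z) := by
      refine ext_left _ _ fun w => ?_
      rw [map_sub, LinearMap.sub_apply, hmul, hmul, hmul, hmul, hmul, lie_lie, map_sub]
      ring
    rw [← hcomm x y, map_sub, LinearMap.sub_apply] at hrep
    exact sub_eq_sub_iff_sub_eq_sub.mp hrep
end

section
/- Let (h, [·,·], ω) be a finite-dimensional symplectic Lie algebra over a field k. Let A denote h equipped with the left-symmetric product ∘ determined by ω(x∘y, z) = −ω(y, [x,z]), and let d : A* → A be the linear isomorphism determined by ⟨d⁻¹(x), y⟩ = ω(x,y). Then d(L*_x f) = [x, d f] for all x ∈ A, f ∈ A*, and L*_{d f} g + L*_{d g} f = 0 for all f,g ∈ A*; that is, (g(A), A*, d, [·,·]_s) is a strict Lie 2-algebra. -/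
/-- Let `(h, [·,·], ω)` be a finite-dimensional symplectic Lie algebra,
`A = h` with the left-symmetric product `∘` determined by `ω(x∘y, z) = −ω(y, [x,z])`,
and `d : A* → A` the linear isomorphism determined by `⟨d⁻¹ x, y⟩ = ω(x,y)`.  Then
`d(L*_x f) = [x, d f]` and `L*_{d f} g + L*_{d g} f = 0`; that is,
`(g(A), A*, d, [·,·]_s)` is a strict Lie 2-algebra. -/
theorem symplectic_gives_strictLie2
    {k : Type*} [Field k] {L : Type*} [LieRing L] [LieAlgebra k L]
    [FiniteDimensional k L]
    (ω : L →ₗ[k] L →ₗ[k] k)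
    (hskew : ∀ x y : L, ω x y = - ω y x)
    (hnd : ∀ x : L, (∀ y : L, ω x y = 0) → x = 0)
    (hcocycle : ∀ x y z : L, ω ⁅x, y⁆ z + ω ⁅y, z⁆ x + ω ⁅z, x⁆ y = 0)
    (mul : L →ₗ[k] L →ₗ[k] L)
    (hmul : ∀ x y z : L, ω (mul x y) z = - ω y ⁅x, z⁆)
    (d : Module.Dual k L ≃ₗ[k] L)
    (hd : ∀ x y : L, d.symm x y = ω x y) :
    (∀ (x : L) (f : Module.Dual k L), d (Ldual mul x f) = ⁅x, d f⁆) ∧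
    (∀ f g : Module.Dual k L, Ldual mul (d f) g + Ldual mul (d g) f = 0) := by
  -- `⟨L*_x f, y⟩ = -ω(d f, x∘y) = ω(x∘y, d f) = -ω(y, [x, d f]) = ω([x, d f], y)`.
  have hbracket : ∀ (x : L) (f : Module.Dual k L), d (Ldual mul x f) = ⁅x, d f⁆ := by
    intro x f
    rw [← LinearEquiv.eq_symm_apply]
    ext y
    have hf : f (mul x y) = ω (d f) (mul x y) := by
      rw [← hd, LinearEquiv.symm_apply_apply]
    rw [hd, Ldual, LinearMap.neg_apply, LinearMap.comp_apply, hf, hskew (d f), hmul, neg_neg,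
      hskew ⁅x, d f⁆]
  refine ⟨hbracket, fun f g => d.injective ?_⟩
  rw [map_add, map_zero, hbracket, hbracket, ← lie_skew, neg_add_cancel]
end

section
/- Let G = (g0, g_{-1}, d, [·,·]) and G' = (g0', g_{-1}', d', [·,·]') be strict Lie 2-algebras over a field k. Let μ = (μ0, μ1) be a strict representation of G on the 2-term complex d' : g_{-1}' → g0', and μ' = (μ0', μ1') a strict representation of G' on the 2-term complex d : g_{-1} → g0, and assume the six matched-pair compatibility conditions hold. Then the data (g0 ⊕ g0', g_{-1} ⊕ g_{-1}', d ⊕ d') with bracket [(x,x'), (y,y')] := ([x,y] + μ0'(x')y − μ0'(y')x, [x',y']' + μ0(x)y' − μ0(y)x') on the degree-0 part, and mixed bracket [(x,x'), (h,h')] := ([x,h] + μ0'(x')h − μ1'(h')x, [x',h']' + μ0(x)h' − μ1(h)x'), is a strict Lie 2-algebra. -/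
/-!
The two components of the direct sum are exchanged by swapping `G` with `G'` and `μ` with `μ'`, so
each identity only has to be checked in the component of `G`.

There, expand by bilinearity and sort the terms by which of the arguments lie in `G` and which
in `G'`. In the Jacobi identity (`jacobi_fst`) the terms with no primed argument are the Jacobi
identity of `g0`, those with one primed argument are the compatibility condition for
`μ0'(x')[x, y]`, and those with two say that `μ0'` is a representation. In the module identity
(`module_fst`) the terms in `x, y, h` are the module law of `G`, those in `x, y, h'` and
`x', y, h` are the compatibility conditions for `μ1'(h')[x, y]` and `μ0'(x')[x, h]`, and those with
two primed arguments are the representation laws of `μ0'` and `μ1'`. The two identities for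
`d ⊕ d'` only use that the representations are compatible with the differentials: in
`[dh, k] + [dk, h] = 0` the cross terms cancel because `μ0'(d'h') k = μ1'(h')(d k)`.
-/

section

variable (k : Type*) [Field k]

/-- A strict Lie 2-algebra structure on a 2-term complex `d : Gm → G0`:
`b0` is a Lie bracket on `G0`, `b1 : G0 × Gm → Gm` makes `Gm` a `G0`-module, and
`d` satisfies `d[x,h] = [x,dh]` and `[dh,k] + [dk,h] = 0`. -/
def IsStrictLie2 (G0 Gm : Type*) [AddCommGroup G0] [Module k G0]
    [AddCommGroup Gm] [Module k Gm]
    (b0 : G0 → G0 → G0) (b1 : G0 → Gm → Gm) (d : Gm → G0) : Prop :=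
  (∀ y : G0, IsLinearMap k fun x => b0 x y) ∧
  (∀ x : G0, IsLinearMap k (b0 x)) ∧
  (∀ x y : G0, b0 x y = - b0 y x) ∧
  (∀ x y z : G0, b0 (b0 x y) z + b0 (b0 y z) x + b0 (b0 z x) y = 0) ∧
  (∀ h : Gm, IsLinearMap k fun x => b1 x h) ∧
  (∀ x : G0, IsLinearMap k (b1 x)) ∧
  (∀ (x y : G0) (h : Gm), b1 (b0 x y) h = b1 x (b1 y h) - b1 y (b1 x h)) ∧
  IsLinearMap k d ∧
  (∀ (x : G0) (h : Gm), d (b1 x h) = b0 x (d h)) ∧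
  (∀ h h' : Gm, b1 (d h) h' + b1 (d h') h = 0)

/-- A strict representation of the strict Lie 2-algebra `(G0, Gm, b0, b1, d)` on a
2-term complex `∂ : Vm → V0`, given by `μ00 : G0 → End(V0)`, `μ01 : G0 → End(Vm)` and
`μ1 : Gm → Hom(V0, Vm)`. -/
def IsStrictRep (G0 Gm V0 Vm : Type*) [AddCommGroup G0] [Module k G0]
    [AddCommGroup Gm] [Module k Gm] [AddCommGroup V0] [Module k V0]
    [AddCommGroup Vm] [Module k Vm]
    (b0 : G0 → G0 → G0) (b1 : G0 → Gm → Gm) (d : Gm → G0) (p : Vm → V0)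
    (μ00 : G0 → V0 → V0) (μ01 : G0 → Vm → Vm) (μ1 : Gm → V0 → Vm) : Prop :=
  (∀ x : G0, IsLinearMap k (μ00 x)) ∧
  (∀ v : V0, IsLinearMap k fun x => μ00 x v) ∧
  (∀ x : G0, IsLinearMap k (μ01 x)) ∧
  (∀ m : Vm, IsLinearMap k fun x => μ01 x m) ∧
  (∀ h : Gm, IsLinearMap k (μ1 h)) ∧
  (∀ v : V0, IsLinearMap k fun h => μ1 h v) ∧
  (∀ (x : G0) (m : Vm), p (μ01 x m) = μ00 x (p m)) ∧
  (∀ (x y : G0) (v : V0), μ00 (b0 x y) v = μ00 x (μ00 y v) - μ00 y (μ00 x v)) ∧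
  (∀ (x y : G0) (m : Vm), μ01 (b0 x y) m = μ01 x (μ01 y m) - μ01 y (μ01 x m)) ∧
  (∀ (h : Gm) (v : V0), μ00 (d h) v = p (μ1 h v)) ∧
  (∀ (h : Gm) (m : Vm), μ01 (d h) m = μ1 h (p m)) ∧
  (∀ (x : G0) (h : Gm) (v : V0), μ1 (b1 x h) v = μ01 x (μ1 h v) - μ1 h (μ00 x v))

/-- The six matched-pair compatibility conditions for a pair of strict Lie 2-algebras
`G = (G0, Gm, b0, b1, d)` and `G' = (G0', Gm', b0', b1', d')` with mutual representations
`μ = (μ00, μ01, μ1)` of `G` on `G'` and `μ' = (ν00, ν01, ν1)` of `G'` on `G`. -/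
def MatchedPairConditions (G0 Gm G0' Gm' : Type*) [AddCommGroup G0] [Module k G0]
    [AddCommGroup Gm] [Module k Gm] [AddCommGroup G0'] [Module k G0']
    [AddCommGroup Gm'] [Module k Gm']
    (b0 : G0 → G0 → G0) (b1 : G0 → Gm → Gm)
    (b0' : G0' → G0' → G0') (b1' : G0' → Gm' → Gm')
    (μ00 : G0 → G0' → G0') (μ01 : G0 → Gm' → Gm') (μ1 : Gm → G0' → Gm')
    (ν00 : G0' → G0 → G0) (ν01 : G0' → Gm → Gm) (ν1 : Gm' → G0 → Gm) : Prop :=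
  (∀ (x' : G0') (x y : G0),
    ν00 x' (b0 x y) = b0 x (ν00 x' y) + b0 (ν00 x' x) y
      + ν00 (μ00 y x') x - ν00 (μ00 x x') y) ∧
  (∀ (x : G0) (x' y' : G0'),
    μ00 x (b0' x' y') = b0' x' (μ00 x y') + b0' (μ00 x x') y'
      + μ00 (ν00 y' x) x' - μ00 (ν00 x' x) y') ∧
  (∀ (h' : Gm') (x y : G0),
    ν1 h' (b0 x y) = b1 x (ν1 h' y) - b1 y (ν1 h' x)
      + ν1 (μ01 y h') x - ν1 (μ01 x h') y) ∧
  (∀ (h : Gm) (x' y' : G0'),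
    μ1 h (b0' x' y') = b1' x' (μ1 h y') - b1' y' (μ1 h x')
      + μ1 (ν01 y' h) x' - μ1 (ν01 x' h) y') ∧
  (∀ (x' : G0') (x : G0) (h : Gm),
    ν01 x' (b1 x h) = b1 x (ν01 x' h) + b1 (ν00 x' x) h
      + ν1 (μ1 h x') x - ν01 (μ00 x x') h) ∧
  (∀ (x : G0) (x' : G0') (h' : Gm'),
    μ01 x (b1' x' h') = b1' x' (μ01 x h') + b1' (μ00 x x') h'
      + μ1 (ν1 h' x) x' - μ01 (ν00 x' x) h')

/-- A map of the form of the brackets of the direct sum is linear in one argument when its three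
terms are. -/
theorem isLinearMap_add_sub {V A : Type*} [AddCommGroup V] [Module k V]
    [AddCommGroup A] [Module k A] {f g h : V → A}
    (hf : IsLinearMap k f) (hg : IsLinearMap k g) (hh : IsLinearMap k h) :
    IsLinearMap k fun v => f v + g v - h v :=
  (hf.mk' f + hg.mk' g - hh.mk' h).isLinear

theorem isLinearMap_comp_fst {V W A : Type*} [AddCommGroup V] [Module k V]
    [AddCommGroup W] [Module k W] [AddCommGroup A] [Module k A] {f : V → A}
    (hf : IsLinearMap k f) : IsLinearMap k fun v : V × W => f v.1 :=
  (hf.mk' f ∘ₗ LinearMap.fst k V W).isLinear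

theorem isLinearMap_comp_snd {V W A : Type*} [AddCommGroup V] [Module k V]
    [AddCommGroup W] [Module k W] [AddCommGroup A] [Module k A] {f : W → A}
    (hf : IsLinearMap k f) : IsLinearMap k fun v : V × W => f v.2 :=
  (hf.mk' f ∘ₗ LinearMap.snd k V W).isLinear

theorem isLinearMap_prodMk {V A B : Type*} [AddCommGroup V] [Module k V]
    [AddCommGroup A] [Module k A] [AddCommGroup B] [Module k B] {f : V → A} {g : V → B}
    (hf : IsLinearMap k f) (hg : IsLinearMap k g) : IsLinearMap k fun v => (f v, g v) :=
  ((hf.mk' f).prod (hg.mk' g)).isLinear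

/-- The component in `g0` of the Jacobi identity of the direct sum. -/
theorem jacobi_fst {G0 G0' : Type*} [AddCommGroup G0] [Module k G0]
    [AddCommGroup G0'] [Module k G0']
    {b0 : G0 → G0 → G0} {b0' : G0' → G0' → G0'} {μ : G0 → G0' → G0'} {ν : G0' → G0 → G0}
    (bl : ∀ y, IsLinearMap k fun x => b0 x y)
    (anti : ∀ x y, b0 x y = - b0 y x)
    (jac : ∀ x y z, b0 (b0 x y) z + b0 (b0 y z) x + b0 (b0 z x) y = 0)
    (νr : ∀ x', IsLinearMap k (ν x')) (νl : ∀ x, IsLinearMap k fun x' => ν x' x)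
    (νrep : ∀ x' y' v, ν (b0' x' y') v = ν x' (ν y' v) - ν y' (ν x' v))
    (c : ∀ x' x y, ν x' (b0 x y) = b0 x (ν x' y) + b0 (ν x' x) y + ν (μ y x') x - ν (μ x x') y)
    (x y z : G0) (x' y' z' : G0') :
    (b0 (b0 x y + ν x' y - ν y' x) z + ν (b0' x' y' + μ x y' - μ y x') z
        - ν z' (b0 x y + ν x' y - ν y' x))
      + (b0 (b0 y z + ν y' z - ν z' y) x + ν (b0' y' z' + μ y z' - μ z y') x
        - ν x' (b0 y z + ν y' z - ν z' y))
      + (b0 (b0 z x + ν z' x - ν x' z) y + ν (b0' z' x' + μ z x' - μ x z') y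
        - ν y' (b0 z x + ν z' x - ν x' z)) = 0 := by
  have ba := fun z x y => (bl z).map_add x y
  have bs := fun z x y => (bl z).map_sub x y
  have la := fun z x y => (νl z).map_add x y
  have ls := fun z x y => (νl z).map_sub x y
  have ra := fun z x y => (νr z).map_add x y
  have rs := fun z x y => (νr z).map_sub x y
  -- antisymmetry puts all actions of `G'` into the first slot of the bracket
  have c' : ∀ x' x y, ν x' (b0 x y)
      = - b0 (ν x' y) x + b0 (ν x' x) y + ν (μ y x') x - ν (μ x x') y := fun x' x y => by
    rw [c, anti x]
  simp only [ba, bs, la, ls, ra, rs, νrep, c']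
  rw [← jac x y z]
  abel

/-- The component in `g_{-1}` of the module identity of the direct sum. -/
theorem module_fst {G0 Gm G0' Gm' : Type*} [AddCommGroup G0] [Module k G0]
    [AddCommGroup Gm] [Module k Gm] [AddCommGroup G0'] [Module k G0']
    [AddCommGroup Gm'] [Module k Gm']
    {b0 : G0 → G0 → G0} {b1 : G0 → Gm → Gm} {b0' : G0' → G0' → G0'} {b1' : G0' → Gm' → Gm'}
    {μ00 : G0 → G0' → G0'} {μ01 : G0 → Gm' → Gm'} {μ1 : Gm → G0' → Gm'}
    {ν00 : G0' → G0 → G0} {ν01 : G0' → Gm → Gm} {ν1 : Gm' → G0 → Gm}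
    (bl : ∀ h, IsLinearMap k fun x => b1 x h) (br : ∀ x, IsLinearMap k (b1 x))
    (bmod : ∀ x y h, b1 (b0 x y) h = b1 x (b1 y h) - b1 y (b1 x h))
    (νr : ∀ x', IsLinearMap k (ν01 x')) (νl : ∀ h, IsLinearMap k fun x' => ν01 x' h)
    (ν1r : ∀ h', IsLinearMap k (ν1 h')) (ν1l : ∀ x, IsLinearMap k fun h' => ν1 h' x)
    (νrep : ∀ x' y' h, ν01 (b0' x' y') h = ν01 x' (ν01 y' h) - ν01 y' (ν01 x' h))
    (ν1rep : ∀ x' h' x, ν1 (b1' x' h') x = ν01 x' (ν1 h' x) - ν1 h' (ν00 x' x))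
    (c3 : ∀ h' x y, ν1 h' (b0 x y) = b1 x (ν1 h' y) - b1 y (ν1 h' x)
      + ν1 (μ01 y h') x - ν1 (μ01 x h') y)
    (c5 : ∀ x' x h, ν01 x' (b1 x h) = b1 x (ν01 x' h) + b1 (ν00 x' x) h
      + ν1 (μ1 h x') x - ν01 (μ00 x x') h)
    (x y : G0) (x' y' : G0') (h : Gm) (h' : Gm') :
    b1 (b0 x y + ν00 x' y - ν00 y' x) h + ν01 (b0' x' y' + μ00 x y' - μ00 y x') h
        - ν1 h' (b0 x y + ν00 x' y - ν00 y' x)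
      = (b1 x (b1 y h + ν01 y' h - ν1 h' y) + ν01 x' (b1 y h + ν01 y' h - ν1 h' y)
          - ν1 (b1' y' h' + μ01 y h' - μ1 h y') x)
        - (b1 y (b1 x h + ν01 x' h - ν1 h' x) + ν01 y' (b1 x h + ν01 x' h - ν1 h' x)
          - ν1 (b1' x' h' + μ01 x h' - μ1 h x') y) := by
  have bla := fun z x y => (bl z).map_add x y
  have bls := fun z x y => (bl z).map_sub x y
  have bra := fun z x y => (br z).map_add x y
  have brs := fun z x y => (br z).map_sub x y
  have la := fun z x y => (νl z).map_add x y
  have ls := fun z x y => (νl z).map_sub x y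
  have ra := fun z x y => (νr z).map_add x y
  have rs := fun z x y => (νr z).map_sub x y
  have la1 := fun z x y => (ν1l z).map_add x y
  have ls1 := fun z x y => (ν1l z).map_sub x y
  have ra1 := fun z x y => (ν1r z).map_add x y
  have rs1 := fun z x y => (ν1r z).map_sub x y
  simp only [bla, bls, bra, brs, la, ls, ra, rs, la1, ls1, ra1, rs1, bmod, νrep, ν1rep, c3, c5]
  abel

/-- Given two strict Lie 2-algebras `G`, `G'` with strict representations
on each other's 2-term complexes satisfying the six matched-pair compatibility conditions,
the direct sum complex `d ⊕ d'` with the indicated brackets is a strict Lie 2-algebra. -/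
theorem matchedPair_directSum_isStrictLie2
    {G0 Gm G0' Gm' : Type*} [AddCommGroup G0] [Module k G0]
    [AddCommGroup Gm] [Module k Gm] [AddCommGroup G0'] [Module k G0']
    [AddCommGroup Gm'] [Module k Gm']
    (b0 : G0 → G0 → G0) (b1 : G0 → Gm → Gm) (d : Gm → G0)
    (b0' : G0' → G0' → G0') (b1' : G0' → Gm' → Gm') (d' : Gm' → G0')
    (μ00 : G0 → G0' → G0') (μ01 : G0 → Gm' → Gm') (μ1 : Gm → G0' → Gm')
    (ν00 : G0' → G0 → G0) (ν01 : G0' → Gm → Gm) (ν1 : Gm' → G0 → Gm)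
    (hG : IsStrictLie2 k G0 Gm b0 b1 d)
    (hG' : IsStrictLie2 k G0' Gm' b0' b1' d')
    (hμ : IsStrictRep k G0 Gm G0' Gm' b0 b1 d d' μ00 μ01 μ1)
    (hν : IsStrictRep k G0' Gm' G0 Gm b0' b1' d' d ν00 ν01 ν1)
    (hmp : MatchedPairConditions k G0 Gm G0' Gm' b0 b1 b0' b1' μ00 μ01 μ1 ν00 ν01 ν1) :
    IsStrictLie2 k (G0 × G0') (Gm × Gm')
      (fun u v => (b0 u.1 v.1 + ν00 u.2 v.1 - ν00 v.2 u.1,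
                   b0' u.2 v.2 + μ00 u.1 v.2 - μ00 v.1 u.2))
      (fun u m => (b1 u.1 m.1 + ν01 u.2 m.1 - ν1 m.2 u.1,
                   b1' u.2 m.2 + μ01 u.1 m.2 - μ1 m.1 u.2))
      (fun m => (d m.1, d' m.2)) := by
  obtain ⟨bl, br, anti, jac, b1l, b1r, bmod, dl, deq, pf⟩ := hG
  obtain ⟨bl', br', anti', jac', b1l', b1r', bmod', dl', deq', pf'⟩ := hG'
  obtain ⟨μr, μl, μmr, μml, μ1r, μ1l, μp, μrep, μmrep, μd, μmd, μ1rep⟩ := hμ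
  obtain ⟨νr, νl, νmr, νml, ν1r, ν1l, νp, νrep, νmrep, νd, νmd, ν1rep⟩ := hν
  obtain ⟨c1, c2, c3, c4, c5, c6⟩ := hmp
  refine ⟨fun v => ?_, fun u => ?_, fun u v => ?_, fun u v w => ?_, fun m => ?_, fun u => ?_,
    fun u v m => ?_, ?_, fun u m => ?_, fun m n => ?_⟩
  · exact isLinearMap_prodMk k
      (isLinearMap_add_sub k (isLinearMap_comp_fst k (bl v.1)) (isLinearMap_comp_snd k (νl v.1))
        (isLinearMap_comp_fst k (νr v.2)))
      (isLinearMap_add_sub k (isLinearMap_comp_snd k (bl' v.2)) (isLinearMap_comp_fst k (μl v.2))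
        (isLinearMap_comp_snd k (μr v.1)))
  · exact isLinearMap_prodMk k
      (isLinearMap_add_sub k (isLinearMap_comp_fst k (br u.1)) (isLinearMap_comp_fst k (νr u.2))
        (isLinearMap_comp_snd k (νl u.1)))
      (isLinearMap_add_sub k (isLinearMap_comp_snd k (br' u.2)) (isLinearMap_comp_snd k (μr u.1))
        (isLinearMap_comp_fst k (μl u.2)))
  · ext
    · dsimp only [Prod.fst_neg]
      rw [anti]
      abel
    · dsimp only [Prod.snd_neg]
      rw [anti']
      abel
  · exact Prod.ext (jacobi_fst k bl anti jac νr νl νrep c1 ..)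
      (jacobi_fst k bl' anti' jac' μr μl μrep c2 ..)
  · exact isLinearMap_prodMk k
      (isLinearMap_add_sub k (isLinearMap_comp_fst k (b1l m.1))
        (isLinearMap_comp_snd k (νml m.1)) (isLinearMap_comp_fst k (ν1r m.2)))
      (isLinearMap_add_sub k (isLinearMap_comp_snd k (b1l' m.2))
        (isLinearMap_comp_fst k (μml m.2)) (isLinearMap_comp_snd k (μ1r m.1)))
  · exact isLinearMap_prodMk k
      (isLinearMap_add_sub k (isLinearMap_comp_fst k (b1r u.1))
        (isLinearMap_comp_fst k (νmr u.2)) (isLinearMap_comp_snd k (ν1l u.1)))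
      (isLinearMap_add_sub k (isLinearMap_comp_snd k (b1r' u.2))
        (isLinearMap_comp_snd k (μmr u.1)) (isLinearMap_comp_fst k (μ1l u.2)))
  · exact Prod.ext
      (module_fst k b1l b1r bmod νmr νml ν1r ν1l νmrep ν1rep c3 c5 ..)
      (module_fst k b1l' b1r' bmod' μmr μml μ1r μ1l μmrep μ1rep c4 c6 ..)
  · exact isLinearMap_prodMk k (isLinearMap_comp_fst k dl) (isLinearMap_comp_snd k dl')
  · ext
    · simp only [dl.map_add, dl.map_sub, deq, νp, νd]
    · simp only [dl'.map_add, dl'.map_sub, deq', μp, μd]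
  · ext
    · dsimp only [Prod.fst_add, Prod.fst_zero]
      rw [νmd, νmd, ← pf m.1 n.1]
      abel
    · dsimp only [Prod.snd_add, Prod.snd_zero]
      rw [μmd, μmd, ← pf' m.2 n.2]
      abel

end
end

section
/- Let G = (g0, g_{-1}, d, [·,·]) and G' = (g0', g_{-1}', d', [·,·]') be strict Lie 2-algebras over a field k, and suppose the direct sum complex d⊕d' : g_{-1}⊕g_{-1}' → g0⊕g0' carries a strict Lie 2-algebra structure [·,·]'' whose restrictions to G and to G' coincide with their given brackets. Define μ0(x)α' := pr_{G'}([x, α']'') for α' ∈ g0' or g_{-1}', μ0'(x')α := pr_G([x', α]'') for α ∈ g0 or g_{-1}, μ1(h)x' := pr_{g_{-1}'}([h, x']''), and μ1'(h')x := pr_{g_{-1}}([h', x]''). Then μ = (μ0, μ1) is a strict representation of G on the complex d' : g_{-1}' → g0', μ' = (μ0', μ1') is a strict representation of G' on d : g_{-1} → g0, the six matched-pair compatibility conditions hold, and the bracket [·,·]'' is recovered by [(x,x'), (y,y')]'' = ([x,y] + μ0'(x')y − μ0'(y')x, [x',y']' + μ0(x)y' − μ0(y)x') and [(x,x'), (h,h')]''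 = ([x,h] + μ0'(x')h − μ1'(h')x, [x',h']' + μ0(x)h' − μ1(h)x'). -/
/-!
Bilinearity splits every bracket of the direct sum into the two given brackets and the mixed
ones. Skew-symmetry of the degree-zero bracket identifies the two projections of a mixed bracket
`[x, y']` with `-μ0'(y')x` and `μ0(x)y'`, so the splitting (`bracket_split`) is exactly the
recovery formula. Every remaining identity is then one component of an axiom of the direct sum,
evaluated on elements each lying in a single summand: the Jacobi identity and the module law on
two elements of one algebra and one of the other give, after projection to one factor, a
representation law, and after projection to the opposite factor, a compatibility condition. The
laws involving `∂` are components of equivariance of `d ⊕ d'` and of `[dh, k] + [dk, h] = 0`.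
-/

section

variable (k : Type*) [Field k]

/-- A biadditive map on a direct sum is the sum of its values on pairs of pure elements. -/
lemma bracket_split {A A' M M' N : Type*} [AddCommGroup A] [Module k A]
    [AddCommGroup A'] [Module k A'] [AddCommGroup M] [Module k M]
    [AddCommGroup M'] [Module k M'] [AddCommGroup N] [Module k N]
    (B : A × A' → M × M' → N)
    (hl : ∀ m, IsLinearMap k fun u => B u m) (hr : ∀ u, IsLinearMap k (B u))
    (x : A) (x' : A') (m : M) (m' : M') :
    B (x, x') (m, m') =
      B (x, 0) (m, 0) + B (x, 0) (0, m') + (B (0, x') (m, 0) + B (0, x') (0, m')) := by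
  have h1 := (hl (m, m')).map_add (x, 0) (0, x')
  have h2 := (hr (x, 0)).map_add (m, 0) (0, m')
  have h3 := (hr (0, x')).map_add (m, 0) (0, m')
  simp only [Prod.mk_add_mk, add_zero, zero_add] at h1 h2 h3
  rw [h1, h2, h3]

/-- If the direct sum complex `d ⊕ d'` of two strict Lie 2-algebras
carries a strict Lie 2-algebra structure restricting to the given ones, then the
projections of the mixed brackets define strict representations of each factor on the
other, the six matched-pair conditions hold, and the bracket is recovered from them. -/
theorem directSum_gives_matchedPair
    {G0 Gm G0' Gm' : Type*} [AddCommGroup G0] [Module k G0]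
    [AddCommGroup Gm] [Module k Gm] [AddCommGroup G0'] [Module k G0']
    [AddCommGroup Gm'] [Module k Gm']
    (b0 : G0 → G0 → G0) (b1 : G0 → Gm → Gm) (d : Gm → G0)
    (b0' : G0' → G0' → G0') (b1' : G0' → Gm' → Gm') (d' : Gm' → G0')
    (B0 : G0 × G0' → G0 × G0' → G0 × G0')
    (B1 : G0 × G0' → Gm × Gm' → Gm × Gm')
    (hG : IsStrictLie2 k G0 Gm b0 b1 d)
    (hG' : IsStrictLie2 k G0' Gm' b0' b1' d')
    (hSum : IsStrictLie2 k (G0 × G0') (Gm × Gm') B0 B1 (fun m => (d m.1, d' m.2)))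
    (hres0 : ∀ x y : G0, B0 (x, 0) (y, 0) = (b0 x y, 0))
    (hres0' : ∀ x' y' : G0', B0 (0, x') (0, y') = (0, b0' x' y'))
    (hres1 : ∀ (x : G0) (h : Gm), B1 (x, 0) (h, 0) = (b1 x h, 0))
    (hres1' : ∀ (x' : G0') (h' : Gm'), B1 (0, x') (0, h') = (0, b1' x' h')) :
    IsStrictRep k G0 Gm G0' Gm' b0 b1 d d'
      (fun x y' => (B0 (x, 0) (0, y')).2)
      (fun x h' => (B1 (x, 0) (0, h')).2)
      (fun h x' => -(B1 (0, x') (h, 0)).2) ∧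
    IsStrictRep k G0' Gm' G0 Gm b0' b1' d' d
      (fun x' y => (B0 (0, x') (y, 0)).1)
      (fun x' h => (B1 (0, x') (h, 0)).1)
      (fun h' x => -(B1 (x, 0) (0, h')).1) ∧
    MatchedPairConditions k G0 Gm G0' Gm' b0 b1 b0' b1'
      (fun x y' => (B0 (x, 0) (0, y')).2)
      (fun x h' => (B1 (x, 0) (0, h')).2)
      (fun h x' => -(B1 (0, x') (h, 0)).2)
      (fun x' y => (B0 (0, x') (y, 0)).1)
      (fun x' h => (B1 (0, x') (h, 0)).1)
      (fun h' x => -(B1 (x, 0) (0, h')).1) ∧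
    (∀ u v : G0 × G0',
      B0 u v = (b0 u.1 v.1 + (B0 (0, u.2) (v.1, 0)).1 - (B0 (0, v.2) (u.1, 0)).1,
                b0' u.2 v.2 + (B0 (u.1, 0) (0, v.2)).2 - (B0 (v.1, 0) (0, u.2)).2)) ∧
    (∀ (u : G0 × G0') (m : Gm × Gm'),
      B1 u m = (b1 u.1 m.1 + (B1 (0, u.2) (m.1, 0)).1 - (-(B1 (u.1, 0) (0, m.2)).1),
                b1' u.2 m.2 + (B1 (u.1, 0) (0, m.2)).2 - (-(B1 (0, u.2) (m.1, 0)).2))) := by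
  obtain ⟨bl, br, bs, -, cl, cr, -, dl, -, -⟩ := hG
  obtain ⟨bl', br', bs', -, cl', cr', -, dl', -, -⟩ := hG'
  obtain ⟨Bl, Br, hS, hJ, Cl, Cr, hM, -, hD, hA⟩ := hSum
  -- The mixed operations are linear, being composites of the bracket with inclusions and
  -- projections of the direct sums.
  have p_r : ∀ x, IsLinearMap k fun y' => (B0 (x, 0) (0, y')).2 := fun x =>
    (LinearMap.snd k G0 G0' ∘ₗ (Br (x, 0)).mk' _ ∘ₗ LinearMap.inr k G0 G0').isLinear
  have p_l : ∀ y', IsLinearMap k fun x => (B0 (x, 0) (0, y')).2 := fun y' =>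
    (LinearMap.snd k G0 G0' ∘ₗ (Bl (0, y')).mk' _ ∘ₗ LinearMap.inl k G0 G0').isLinear
  have q_r : ∀ x', IsLinearMap k fun y => (B0 (0, x') (y, 0)).1 := fun x' =>
    (LinearMap.fst k G0 G0' ∘ₗ (Br (0, x')).mk' _ ∘ₗ LinearMap.inl k G0 G0').isLinear
  have q_l : ∀ y, IsLinearMap k fun x' => (B0 (0, x') (y, 0)).1 := fun y =>
    (LinearMap.fst k G0 G0' ∘ₗ (Bl (y, 0)).mk' _ ∘ₗ LinearMap.inr k G0 G0').isLinear
  have r_r : ∀ x, IsLinearMap k fun h' => (B1 (x, 0) (0, h')).2 := fun x =>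
    (LinearMap.snd k Gm Gm' ∘ₗ (Cr (x, 0)).mk' _ ∘ₗ LinearMap.inr k Gm Gm').isLinear
  have r_l : ∀ h', IsLinearMap k fun x => (B1 (x, 0) (0, h')).2 := fun h' =>
    (LinearMap.snd k Gm Gm' ∘ₗ (Cl (0, h')).mk' _ ∘ₗ LinearMap.inl k G0 G0').isLinear
  have s_r : ∀ x', IsLinearMap k fun h => (B1 (0, x') (h, 0)).1 := fun x' =>
    (LinearMap.fst k Gm Gm' ∘ₗ (Cr (0, x')).mk' _ ∘ₗ LinearMap.inl k Gm Gm').isLinear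
  have s_l : ∀ h, IsLinearMap k fun x' => (B1 (0, x') (h, 0)).1 := fun h =>
    (LinearMap.fst k Gm Gm' ∘ₗ (Cl (h, 0)).mk' _ ∘ₗ LinearMap.inr k G0 G0').isLinear
  have t_l : ∀ h, IsLinearMap k fun x' => -(B1 (0, x') (h, 0)).2 := fun h =>
    (-(LinearMap.snd k Gm Gm' ∘ₗ (Cl (h, 0)).mk' _ ∘ₗ LinearMap.inr k G0 G0')).isLinear
  have t_r : ∀ x', IsLinearMap k fun h => -(B1 (0, x') (h, 0)).2 := fun x' =>
    (-(LinearMap.snd k Gm Gm' ∘ₗ (Cr (0, x')).mk' _ ∘ₗ LinearMap.inl k Gm Gm')).isLinear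
  have w_l : ∀ h', IsLinearMap k fun x => -(B1 (x, 0) (0, h')).1 := fun h' =>
    (-(LinearMap.fst k Gm Gm' ∘ₗ (Cl (0, h')).mk' _ ∘ₗ LinearMap.inl k G0 G0')).isLinear
  have w_r : ∀ x, IsLinearMap k fun h' => -(B1 (x, 0) (0, h')).1 := fun x =>
    (-(LinearMap.fst k Gm Gm' ∘ₗ (Cr (x, 0)).mk' _ ∘ₗ LinearMap.inr k Gm Gm')).isLinear
  have hB0 : ∀ x x' y y', B0 (x, x') (y, y') =
      (b0 x y + (B0 (0, x') (y, 0)).1 - (B0 (0, y') (x, 0)).1,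
        b0' x' y' + (B0 (x, 0) (0, y')).2 - (B0 (y, 0) (0, x')).2) := by
    intro x x' y y'
    have e := bracket_split k B0 Bl Br x x' y y'
    have e1 := congrArg Prod.fst (hS (x, 0) (0, y'))
    have e2 := congrArg Prod.snd (hS (0, x') (y, 0))
    rw [hres0, hres0'] at e
    simp only [Prod.fst_neg, Prod.snd_neg] at e1 e2
    rw [e]
    ext <;> simp only [Prod.fst_add, Prod.snd_add, e1, e2] <;> abel
  have hB1 : ∀ x x' h h', B1 (x, x') (h, h') =
      (b1 x h + (B1 (0, x') (h, 0)).1 - (-(B1 (x, 0) (0, h')).1),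
        b1' x' h' + (B1 (x, 0) (0, h')).2 - (-(B1 (0, x') (h, 0)).2)) := by
    intro x x' h h'
    rw [bracket_split k B1 Cl Cr x x' h h', hres1, hres1']
    ext <;> simp only [Prod.fst_add, Prod.snd_add] <;> abel
  rw [← and_assoc, ← and_assoc]
  refine ⟨?_, fun u v => hB0 u.1 u.2 v.1 v.2, fun u m => hB1 u.1 u.2 m.1 m.2⟩
  -- Naming the mixed operations turns the splittings into rewrite rules that do not loop:
  -- `p, r, t` are `μ0` in degrees `0` and `-1` and `μ1`; `q, s, w` are the same for `μ'`.
  obtain ⟨p, hp⟩ : ∃ p : G0 → G0' → G0', ∀ x y', (B0 (x, 0) (0, y')).2 = p x y' :=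
    ⟨_, fun _ _ => rfl⟩
  obtain ⟨q, hq⟩ : ∃ q : G0' → G0 → G0, ∀ x' y, (B0 (0, x') (y, 0)).1 = q x' y :=
    ⟨_, fun _ _ => rfl⟩
  obtain ⟨r, hr⟩ : ∃ r : G0 → Gm' → Gm', ∀ x h', (B1 (x, 0) (0, h')).2 = r x h' :=
    ⟨_, fun _ _ => rfl⟩
  obtain ⟨s, hs⟩ : ∃ s : G0' → Gm → Gm, ∀ x' h, (B1 (0, x') (h, 0)).1 = s x' h :=
    ⟨_, fun _ _ => rfl⟩
  obtain ⟨t, ht⟩ : ∃ t : Gm → G0' → Gm', ∀ h x', -(B1 (0, x') (h, 0)).2 = t h x' :=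
    ⟨_, fun _ _ => rfl⟩
  obtain ⟨w, hw⟩ : ∃ w : Gm' → G0 → Gm, ∀ h' x, -(B1 (x, 0) (0, h')).1 = w h' x :=
    ⟨_, fun _ _ => rfl⟩
  simp only [hp, hq, hr, hs, ht, hw] at p_l p_r q_l q_r r_l r_r s_l s_r t_l t_r w_l w_r hB0 hB1 ⊢
  clear hp hq hr hs ht hw hres0 hres0' hres1 hres1'
  simp only [Prod.forall, hB0, hB1, Prod.ext_iff, Prod.fst_add, Prod.snd_add, Prod.fst_sub,
    Prod.snd_sub, Prod.fst_zero, Prod.snd_zero] at hJ hM hD hA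
  have z_b0l : ∀ a, b0 0 a = 0 := fun a => (bl a).map_zero
  have z_b0r : ∀ a, b0 a 0 = 0 := fun a => (br a).map_zero
  have z_b0n : ∀ a b, b0 (-a) b = -b0 a b := fun a b => (bl b).map_neg a
  have z_b0l' : ∀ a, b0' 0 a = 0 := fun a => (bl' a).map_zero
  have z_b0r' : ∀ a, b0' a 0 = 0 := fun a => (br' a).map_zero
  have z_b0n' : ∀ a b, b0' (-a) b = -b0' a b := fun a b => (bl' b).map_neg a
  have z_b1l : ∀ a, b1 0 a = 0 := fun a => (cl a).map_zero
  have z_b1r : ∀ a, b1 a 0 = 0 := fun a => (cr a).map_zero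
  have z_b1m : ∀ a b, b1 a (-b) = -b1 a b := fun a b => (cr a).map_neg b
  have z_b1l' : ∀ a, b1' 0 a = 0 := fun a => (cl' a).map_zero
  have z_b1r' : ∀ a, b1' a 0 = 0 := fun a => (cr' a).map_zero
  have z_b1m' : ∀ a b, b1' a (-b) = -b1' a b := fun a b => (cr' a).map_neg b
  have z_pl : ∀ a, p 0 a = 0 := fun a => (p_l a).map_zero
  have z_pr : ∀ a, p a 0 = 0 := fun a => (p_r a).map_zero
  have z_pn : ∀ a b, p (-a) b = -p a b := fun a b => (p_l b).map_neg a
  have z_pm : ∀ a b, p a (-b) = -p a b := fun a b => (p_r a).map_neg b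
  have z_ql : ∀ a, q 0 a = 0 := fun a => (q_l a).map_zero
  have z_qr : ∀ a, q a 0 = 0 := fun a => (q_r a).map_zero
  have z_qn : ∀ a b, q (-a) b = -q a b := fun a b => (q_l b).map_neg a
  have z_qm : ∀ a b, q a (-b) = -q a b := fun a b => (q_r a).map_neg b
  have z_rl : ∀ a, r 0 a = 0 := fun a => (r_l a).map_zero
  have z_rr : ∀ a, r a 0 = 0 := fun a => (r_r a).map_zero
  have z_rn : ∀ a b, r (-a) b = -r a b := fun a b => (r_l b).map_neg a
  have z_rm : ∀ a b, r a (-b) = -r a b := fun a b => (r_r a).map_neg b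
  have z_sl : ∀ a, s 0 a = 0 := fun a => (s_l a).map_zero
  have z_sr : ∀ a, s a 0 = 0 := fun a => (s_r a).map_zero
  have z_sn : ∀ a b, s (-a) b = -s a b := fun a b => (s_l b).map_neg a
  have z_sm : ∀ a b, s a (-b) = -s a b := fun a b => (s_r a).map_neg b
  have z_tl : ∀ a, t 0 a = 0 := fun a => (t_r a).map_zero
  have z_tr : ∀ a, t a 0 = 0 := fun a => (t_l a).map_zero
  have z_tn : ∀ a b, t (-a) b = -t a b := fun a b => (t_r b).map_neg a
  have z_tm : ∀ a b, t a (-b) = -t a b := fun a b => (t_l a).map_neg b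
  have z_wl : ∀ a, w 0 a = 0 := fun a => (w_r a).map_zero
  have z_wr : ∀ a, w a 0 = 0 := fun a => (w_l a).map_zero
  have z_wn : ∀ a b, w (-a) b = -w a b := fun a b => (w_r b).map_neg a
  have z_wm : ∀ a b, w a (-b) = -w a b := fun a b => (w_l a).map_neg b
  have z_d := dl.map_zero
  have z_d' := dl'.map_zero
  have n_d : ∀ a, d (-a) = -d a := fun a => dl.map_neg a
  have n_d' : ∀ a, d' (-a) = -d' a := fun a => dl'.map_neg a
  -- Components of the axioms of the direct sum on arguments taken from single summands.
  have e1 := fun x m => (hD x 0 0 m).2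
  have e2 := fun x y v => (hJ x 0 y 0 0 v).2
  have e3 := fun x y m => (hM x 0 y 0 0 m).2
  have e4 := fun h v => (hD 0 v h 0).2
  have e5 := fun h m => (hA h 0 0 m).2
  have e6 := fun x h v => (hM 0 v x 0 h 0).2
  have e7 := fun x' m => (hD 0 x' m 0).1
  have e8 := fun x' y' v => (hJ 0 x' 0 y' v 0).1
  have e9 := fun x' y' m => (hM 0 x' 0 y' m 0).1
  have e10 := fun h' v => (hD v 0 0 h').1
  have e11 := fun h' m => (hA 0 h' m 0).1
  have e12 := fun x' h' v => (hM v 0 0 x' 0 h').1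
  have e13 := fun x' x y => (hJ x 0 y 0 0 x').1
  have e14 := fun x x' y' => (hJ x 0 0 x' 0 y').2
  have e15 := fun h' x y => (hM x 0 y 0 0 h').1
  have e16 := fun h x' y' => (hM 0 x' 0 y' h 0).2
  have e17 := fun x' x h => (hM 0 x' x 0 h 0).1
  have e18 := fun x x' h' => (hM x 0 0 x' 0 h').2
  simp only [z_b0l, z_b0r, z_b0n, z_b0l', z_b0r', z_b0n', z_b1l, z_b1r, z_b1m, z_b1l', z_b1r', z_b1m',
      z_pl, z_pr, z_pn, z_pm, z_ql, z_qr, z_qn, z_qm, z_rl, z_rr, z_rn, z_rm, z_sl, z_sr, z_sn,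
      z_sm, z_tl, z_tr, z_tn, z_tm, z_wl, z_wr, z_wn, z_wm, z_d, z_d', n_d, n_d', add_zero,
      zero_add, sub_zero, zero_sub, sub_neg_eq_add]
    at e1 e2 e3 e4 e5 e6 e7 e8 e9 e10 e11 e12 e13 e14 e15 e16 e17 e18
  refine ⟨⟨⟨p_r, p_l, r_r, r_l, t_l, t_r, ?_, ?_, ?_, ?_, ?_, ?_⟩,
    ⟨q_r, q_l, s_r, s_l, w_l, w_r, ?_, ?_, ?_, ?_, ?_, ?_⟩⟩, ?_, ?_, ?_, ?_, ?_, ?_⟩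
  · intro x m
    have f := e1 x m
    clear * - f
    grind
  · intro x y v
    have f := e2 x y v
    clear * - f
    grind
  · intro x y m
    have f := e3 x y m
    clear * - f
    grind
  · intro h v
    have f := e4 h v
    clear * - f
    grind
  · intro h m
    have f := e5 h m
    clear * - f
    grind
  · intro x h v
    have f := e6 x h v
    clear * - f
    grind
  · intro x' m
    have f := e7 x' m
    clear * - f
    grind
  · intro x' y' v
    have f := e8 x' y' v
    clear * - f
    grind
  · intro x' y' m
    have f := e9 x' y' m
    clear * - f
    grind
  · intro h' v
    have f := e10 h' v
    clear * - f
    grind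
  · intro h' m
    have f := e11 h' m
    clear * - f
    grind
  · intro x' h' v
    have f := e12 x' h' v
    clear * - f
    grind
  · intro x' x y
    have f := e13 x' x y
    -- Jacobi produces `[μ0'(x')y, x]`, the compatibility condition `[x, μ0'(x')y]`.
    have g := bs x (q x' y)
    clear * - f g
    grind
  · intro x x' y'
    have f := e14 x x' y'
    -- Jacobi produces `[μ0(x)y', x']'`, the compatibility condition `[x', μ0(x)y']'`.
    have g := bs' x' (p x y')
    clear * - f g
    grind
  · intro h' x y
    have f := e15 h' x y
    clear * - f
    grind
  · intro h x' y'
    have f := e16 h x' y'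
    clear * - f
    grind
  · intro x' x h
    have f := e17 x' x h
    clear * - f
    grind
  · intro x x' h'
    have f := e18 x x' h'
    clear * - f
    grind

end
end

section
/- Let (g0, g_{-1}, d, [·,·]) be a strict Lie 2-algebra over a field k, and let S = g0 ⊕ g_{-1} be its semidirect product Lie algebra with bracket [x+h, y+k]_S = [x,y] + [x,k] − [y,h]. Extend d to a linear map d̂ : S → S by d̂(x+h) = dh, and for α ∈ S write ad_α^⊗ := ad_α⊗1 + 1⊗ad_α acting on S⊗S. Then for every 𝔯 ∈ g_{-1}⊗g_{-1} ⊆ S⊗S: (i) (d̂⊗1 + 1⊗d̂)(ad_x^⊗ 𝔯) = ad_x^⊗((d̂⊗1 + 1⊗d̂)𝔯) for all x ∈ g0; and (ii) ad_{dh}^⊗ 𝔯 = ad_h^⊗((d̂⊗1 + 1⊗d̂)𝔯) for all h ∈ g_{-1}. Consequently, for any r ∈ (g0⊗g_{-1}) ⊕ (g_{-1}⊗g0) ⊆ S⊗S, setting φ(x) := ad_x^⊗ 𝔯, the maps δ0(x) := ad_x^⊗ r − (d̂⊗1+1⊗d̂)(φ(x)) and δ1(h) := ad_h^⊗ r − φ(dh)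 satisfy δ0(x) = ad_x^⊗ R and δ1(h) = ad_h^⊗ R, where R := r − (d̂⊗1+1⊗d̂)𝔯. -/
/-!
All maps are linear in the tensors, so everything reduces to pure tensors `a ⊗ b` with
`a b : gm`. For (i), the equivariance `d (ρ x h) = ⁅x, d h⁆` says that `dhat d` commutes with
`adS ρ (x, 0)` on `gm`, hence so do the induced derivations of the tensor square.
For (ii), the Peiffer identity `hdd` gives `[h, d a] = -ρ (d a) h = ρ (d h) a`, while
`[h, a] = 0` for `h a : gm`, so `ad_h` applied to `d a ⊗ b + a ⊗ d b` is
`ρ (d h) a ⊗ b + a ⊗ ρ (d h) b`. The statements about `δ0` and `δ1` follow since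
`adT ρ u` is additive.
-/

open TensorProduct

section

variable {k : Type*} [Field k] {g0 : Type*} [LieRing g0] [LieAlgebra k g0]
  {gm : Type*} [AddCommGroup gm] [Module k gm]

/-- The adjoint operator of the semidirect product Lie algebra `S = g0 ⋉ g_{-1}`
(with `[x+h, y+k]_S = [x,y] + ρ(x)k − ρ(y)h`): `adS ρ u v = [u, v]_S`. -/
noncomputable def adS (ρ : g0 →ₗ[k] gm →ₗ[k] gm) (u : g0 × gm) :
    (g0 × gm) →ₗ[k] (g0 × gm) :=
  LinearMap.prod
    ((LieAlgebra.ad k g0 u.1 : g0 →ₗ[k] g0) ∘ₗ LinearMap.fst k g0 gm)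
    ((ρ u.1) ∘ₗ LinearMap.snd k g0 gm - (ρ.flip u.2) ∘ₗ LinearMap.fst k g0 gm)

/-- The extension `d̂ : S → S`, `d̂(x+h) = d h`, of `d : g_{-1} → g0`. -/
noncomputable def dhat (d : gm →ₗ[k] g0) : (g0 × gm) →ₗ[k] (g0 × gm) :=
  LinearMap.prod (d ∘ₗ LinearMap.snd k g0 gm) 0

/-- `ad_u ⊗ 1 + 1 ⊗ ad_u` on `S ⊗ S`. -/
noncomputable def adT (ρ : g0 →ₗ[k] gm →ₗ[k] gm) (u : g0 × gm)
    (t : (g0 × gm) ⊗[k] (g0 × gm)) : (g0 × gm) ⊗[k] (g0 × gm) :=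
  TensorProduct.map (adS ρ u) LinearMap.id t + TensorProduct.map LinearMap.id (adS ρ u) t

/-- `d̂ ⊗ 1 + 1 ⊗ d̂` on `S ⊗ S`. -/
noncomputable def dT (d : gm →ₗ[k] g0) (t : (g0 × gm) ⊗[k] (g0 × gm)) :
    (g0 × gm) ⊗[k] (g0 × gm) :=
  TensorProduct.map (dhat d) LinearMap.id t + TensorProduct.map LinearMap.id (dhat d) t

/-- The inclusion `g_{-1} ⊗ g_{-1} ⊆ S ⊗ S`. -/
noncomputable def inclMM (m : gm ⊗[k] gm) : (g0 × gm) ⊗[k] (g0 × gm) :=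
  TensorProduct.map (LinearMap.inr k g0 gm) (LinearMap.inr k g0 gm) m

/-- The inclusion `(g0 ⊗ g_{-1}) ⊕ (g_{-1} ⊗ g0) ⊆ S ⊗ S`. -/
noncomputable def incl0M (r1 : g0 ⊗[k] gm) (r2 : gm ⊗[k] g0) :
    (g0 × gm) ⊗[k] (g0 × gm) :=
  TensorProduct.map (LinearMap.inl k g0 gm) (LinearMap.inr k g0 gm) r1
    + TensorProduct.map (LinearMap.inr k g0 gm) (LinearMap.inl k g0 gm) r2

theorem adT_add (ρ : g0 →ₗ[k] gm →ₗ[k] gm) (u : g0 × gm) (s t : (g0 × gm) ⊗[k] (g0 × gm)) :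
    adT ρ u (s + t) = adT ρ u s + adT ρ u t := by
  simp only [adT, map_add]; abel

theorem adT_sub (ρ : g0 →ₗ[k] gm →ₗ[k] gm) (u : g0 × gm) (s t : (g0 × gm) ⊗[k] (g0 × gm)) :
    adT ρ u (s - t) = adT ρ u s - adT ρ u t := by
  simp only [adT, map_sub]; abel

theorem dT_add (d : gm →ₗ[k] g0) (s t : (g0 × gm) ⊗[k] (g0 × gm)) :
    dT d (s + t) = dT d s + dT d t := by
  simp only [dT, map_add]; abel

theorem inclMM_add (s t : gm ⊗[k] gm) :
    (inclMM (s + t) : (g0 × gm) ⊗[k] (g0 × gm)) = inclMM s + inclMM t :=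
  map_add _ s t

theorem dT_adT_inclMM (ρ : g0 →ₗ[k] gm →ₗ[k] gm) (d : gm →ₗ[k] g0)
    (hd : ∀ (x : g0) (h : gm), d (ρ x h) = ⁅x, d h⁆) (m : gm ⊗[k] gm) (x : g0) :
    dT d (adT ρ ((x, 0) : g0 × gm) (inclMM m))
      = adT ρ ((x, 0) : g0 × gm) (dT d (inclMM m)) := by
  induction m with
  | zero => simp [adT, dT, inclMM]
  | add s t hs ht => simp only [inclMM_add, adT_add, dT_add, hs, ht]
  | tmul a b =>
    simp [adT, dT, inclMM, adS, dhat, hd]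
    abel

theorem adT_d_inclMM (ρ : g0 →ₗ[k] gm →ₗ[k] gm) (d : gm →ₗ[k] g0)
    (hdd : ∀ h h' : gm, ρ (d h) h' + ρ (d h') h = 0) (m : gm ⊗[k] gm) (h : gm) :
    adT ρ ((d h, 0) : g0 × gm) (inclMM m)
      = adT ρ ((0, h) : g0 × gm) (dT d (inclMM m)) := by
  induction m with
  | zero => simp [adT, dT, inclMM]
  | add s t hs ht => simp only [inclMM_add, adT_add, dT_add, hs, ht]
  | tmul a b =>
    have peiffer (c : gm) : -ρ (d c) h = ρ (d h) c := (eq_neg_of_add_eq_zero_left (hdd h c)).symm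
    have hz : ((0, 0) : g0 × gm) = 0 := rfl
    simp [adT, dT, inclMM, adS, dhat, peiffer, hz]

/-- Let `(g0, g_{-1}, d, [·,·])` be a strict Lie 2-algebra, `S` its
semidirect product Lie algebra.  For every `𝔯 ∈ g_{-1} ⊗ g_{-1} ⊆ S ⊗ S`:
(i) `(d̂⊗1+1⊗d̂)` intertwines `ad_x^⊗` on `𝔯`; (ii) `ad_{dh}^⊗ 𝔯 = ad_h^⊗((d̂⊗1+1⊗d̂)𝔯)`;
consequently for any `r ∈ (g0⊗g_{-1}) ⊕ (g_{-1}⊗g0)`, with `φ(x) = ad_x^⊗ 𝔯`, the maps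
`δ0(x) = ad_x^⊗ r − (d̂⊗1+1⊗d̂)(φ(x))` and `δ1(h) = ad_h^⊗ r − φ(dh)` satisfy
`δ0(x) = ad_x^⊗ R`, `δ1(h) = ad_h^⊗ R` where `R = r − (d̂⊗1+1⊗d̂)𝔯`. -/
theorem coboundary_shift_lemma
    (ρ : g0 →ₗ[k] gm →ₗ[k] gm)
    (hmod : ∀ x y : g0, ρ ⁅x, y⁆ = ρ x ∘ₗ ρ y - ρ y ∘ₗ ρ x)
    (d : gm →ₗ[k] g0)
    (hd : ∀ (x : g0) (h : gm), d (ρ x h) = ⁅x, d h⁆)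
    (hdd : ∀ h h' : gm, ρ (d h) h' + ρ (d h') h = 0)
    (m : gm ⊗[k] gm) :
    (∀ x : g0,
      dT d (adT ρ ((x, 0) : g0 × gm) (inclMM m))
        = adT ρ ((x, 0) : g0 × gm) (dT d (inclMM m))) ∧
    (∀ h : gm,
      adT ρ ((d h, 0) : g0 × gm) (inclMM m)
        = adT ρ ((0, h) : g0 × gm) (dT d (inclMM m))) ∧
    (∀ (r1 : g0 ⊗[k] gm) (r2 : gm ⊗[k] g0) (x : g0),
      adT ρ ((x, 0) : g0 × gm) (incl0M r1 r2) - dT d (adT ρ ((x, 0) : g0 × gm) (inclMM m))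
        = adT ρ ((x, 0) : g0 × gm) (incl0M r1 r2 - dT d (inclMM m))) ∧
    (∀ (r1 : g0 ⊗[k] gm) (r2 : gm ⊗[k] g0) (h : gm),
      adT ρ ((0, h) : g0 × gm) (incl0M r1 r2) - adT ρ ((d h, 0) : g0 × gm) (inclMM m)
        = adT ρ ((0, h) : g0 × gm) (incl0M r1 r2 - dT d (inclMM m))) := by
  have h1 := dT_adT_inclMM ρ d hd m
  have h2 := adT_d_inclMM ρ d hdd m
  refine ⟨h1, h2, fun r1 r2 x => ?_, fun r1 r2 h => ?_⟩
  · rw [adT_sub, h1]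
  · rw [adT_sub, h2]

end
end

section
/- Let A be a finite-dimensional left-symmetric algebra over a field k and g := g(A) ⋉_{L*} A* the semidirect product Lie algebra on A ⊕ A* with bracket [x+f, y+g]_s = (x∘y − y∘x) + L*_x g − L*_y f. Define the bilinear form ω_p on A ⊕ A* by ω_p(x+f, y+g) := f(y) − g(x). Then ω_p is skew-symmetric, nondegenerate, and satisfies the 2-cocycle identity ω_p([u,v]_s, w) + ω_p([v,w]_s, u) + ω_p([w,u]_s, v) = 0 for all u,v,w ∈ A ⊕ A*; that is, (g(A) ⋉_{L*} A*, ω_p) is a symplectic Lie algebra. -/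
/-- The semidirect product bracket `[x+f, y+g]_s = (x∘y − y∘x) + L*_x g − L*_y f`
on `A ⊕ A*`. -/
noncomputable def sdBracket {k : Type*} [Field k] {A : Type*} [AddCommGroup A] [Module k A]
    (mul : A →ₗ[k] A →ₗ[k] A) (u v : A × Module.Dual k A) : A × Module.Dual k A :=
  (mul u.1 v.1 - mul v.1 u.1, Ldual mul u.1 v.2 - Ldual mul v.1 u.2)

/-- The canonical bilinear form `ω_p(x+f, y+g) = f(y) − g(x)` on `A ⊕ A*`. -/
noncomputable def omegaP {k : Type*} [Field k] {A : Type*} [AddCommGroup A] [Module k A]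
    (u v : A × Module.Dual k A) : k :=
  u.2 v.1 - v.2 u.1

/-- For a finite-dimensional left-symmetric algebra `A`, the bilinear
form `ω_p(x+f, y+g) := f(y) − g(x)` on the semidirect product Lie algebra
`g(A) ⋉_{L*} A*` is skew-symmetric, nondegenerate and a 2-cocycle; i.e.
`(g(A) ⋉_{L*} A*, ω_p)` is a symplectic Lie algebra. -/
theorem semidirect_is_symplectic
    {k : Type*} [Field k] {A : Type*} [AddCommGroup A] [Module k A]
    [FiniteDimensional k A]
    (mul : A →ₗ[k] A →ₗ[k] A)
    (hls : ∀ x y z : A,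
      mul (mul x y) z - mul x (mul y z) = mul (mul y x) z - mul y (mul x z)) :
    (∀ u v : A × Module.Dual k A, omegaP u v = - omegaP v u) ∧
    (∀ u : A × Module.Dual k A, (∀ v : A × Module.Dual k A, omegaP u v = 0) → u = 0) ∧
    (∀ u v w : A × Module.Dual k A,
      omegaP (sdBracket mul u v) w + omegaP (sdBracket mul v w) u +
        omegaP (sdBracket mul w u) v = 0) := by
  refine ⟨fun u v => ?_, fun u hu => ?_, fun u v w => ?_⟩
  · simp only [omegaP]
    ring
  · refine Prod.ext ?_ ?_
    · -- Pairing with `0 + g` shows that every functional `g` vanishes at `u.1`.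
      refine (Module.forall_dual_apply_eq_zero_iff k u.1).1 fun g => ?_
      simpa [omegaP] using hu (0, g)
    · ext y
      simpa [omegaP] using hu (y, 0)
  · -- Each term, such as `u.2 (v.1 ∘ w.1)`, occurs once with each sign.
    simp only [omegaP, sdBracket, Ldual, LinearMap.sub_apply, LinearMap.neg_apply,
      LinearMap.comp_apply, map_sub]
    ring
end

section
/- Let A be a finite-dimensional left-symmetric algebra over a field k. Define ad*_x : A* → A* by ⟨ad*_x f, y⟩ = −⟨f, x∘y − y∘x⟩, and define a bilinear product on Â := A ⊕ A* by (x+f) ∘̄ (y+g) := x∘y + ad*_x g + ad*_y f − L*_y f. Then: (i) ∘̄ is left-symmetric, i.e. (u∘̄v)∘̄w − u∘̄(v∘̄w) = (v∘̄u)∘̄w − v∘̄(u∘̄w) for all u,v,w ∈ Â; (ii) its commutator equals the semidirect product bracket: u∘̄v − v∘̄u = [u,v]_s, where [x+f, y+g]_s = (x∘y − y∘x) + L*_x g − L*_y f; and (iii) ω_p(u∘̄v, w) = −ω_p(v, [u,w]_s) for all u,v,w ∈ Â, where ω_p(x+f, y+g) = f(y) − g(x). -/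
/-- The coadjoint operator `ad*_x` of the sub-adjacent Lie algebra,
`⟨ad*_x f, y⟩ = −⟨f, x∘y − y∘x⟩`. -/
noncomputable def adDual {k : Type*} [Field k] {A : Type*} [AddCommGroup A] [Module k A]
    (mul : A →ₗ[k] A →ₗ[k] A) (x : A) (f : Module.Dual k A) : Module.Dual k A :=
  -(f ∘ₗ (mul x - mul.flip x))

/-- The product `(x+f) ∘̄ (y+g) = x∘y + ad*_x g + ad*_y f − L*_y f` on `Â = A ⊕ A*`. -/
noncomputable def hatMul {k : Type*} [Field k] {A : Type*} [AddCommGroup A] [Module k A]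
    (mul : A →ₗ[k] A →ₗ[k] A) (u v : A × Module.Dual k A) : A × Module.Dual k A :=
  (mul u.1 v.1, adDual mul u.1 v.2 + adDual mul v.1 u.2 - Ldual mul v.1 u.2)

/-- The two summands `ad*_y f - L*_y f` combine into `t ↦ f(t ∘ y)`, the dual of right
multiplication by `y`. -/
theorem hatMul_snd_apply {k : Type*} [Field k] {A : Type*} [AddCommGroup A] [Module k A]
    (mul : A →ₗ[k] A →ₗ[k] A) (u v : A × Module.Dual k A) (t : A) :
    (hatMul mul u v).2 t = -v.2 (mul u.1 t - mul t u.1) + u.2 (mul t v.1) := by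
  simp [hatMul, adDual, Ldual]
  ring

/-- The Jacobi identity of the sub-adjacent Lie algebra: the sum of the left-symmetry identities
over the cyclic permutations of `x, y, t`. -/
theorem leftSymmetric_jacobi {k : Type*} [Field k] {A : Type*} [AddCommGroup A] [Module k A]
    (mul : A →ₗ[k] A →ₗ[k] A)
    (hls : ∀ x y z : A,
      mul (mul x y) z - mul x (mul y z) = mul (mul y x) z - mul y (mul x z)) (x y t : A) :
    mul (mul x y) t - mul t (mul x y) +
        (mul y (mul x t - mul t x) - mul (mul x t - mul t x) y) =
      mul (mul y x) t - mul t (mul y x) +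
        (mul x (mul y t - mul t y) - mul (mul y t - mul t y) x) := by
  simp only [map_sub, LinearMap.sub_apply]
  linear_combination (norm := module) hls x y t + hls y t x + hls t x y

/-- For a finite-dimensional left-symmetric algebra `A`, the product
`(x+f) ∘̄ (y+g) := x∘y + ad*_x g + ad*_y f − L*_y f` on `Â = A ⊕ A*` is (i) left-symmetric,
(ii) its commutator is the semidirect product bracket `[·,·]_s`, and (iii) it is related
to the symplectic form `ω_p` by `ω_p(u ∘̄ v, w) = −ω_p(v, [u,w]_s)`. -/
theorem hatMul_leftSymmetric_compatible
    {k : Type*} [Field k] {A : Type*} [AddCommGroup A] [Module k A]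
    [FiniteDimensional k A]
    (mul : A →ₗ[k] A →ₗ[k] A)
    (hls : ∀ x y z : A,
      mul (mul x y) z - mul x (mul y z) = mul (mul y x) z - mul y (mul x z)) :
    (∀ u v w : A × Module.Dual k A,
      hatMul mul (hatMul mul u v) w - hatMul mul u (hatMul mul v w)
        = hatMul mul (hatMul mul v u) w - hatMul mul v (hatMul mul u w)) ∧
    (∀ u v : A × Module.Dual k A,
      hatMul mul u v - hatMul mul v u = sdBracket mul u v) ∧
    (∀ u v w : A × Module.Dual k A,
      omegaP (hatMul mul u v) w = - omegaP v (sdBracket mul u w)) := by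
  refine ⟨fun u v w => Prod.ext (hls u.1 v.1 w.1) (LinearMap.ext fun t => ?_),
    fun u v => Prod.ext rfl (LinearMap.ext fun t => ?_), fun u v w => ?_⟩
  · obtain ⟨x, f⟩ := u
    obtain ⟨y, g⟩ := v
    obtain ⟨z, h⟩ := w
    have hh := congrArg h (leftSymmetric_jacobi mul hls x y t)
    have hf := congrArg f (hls t y z)
    have hg := congrArg g (hls t x z)
    simp only [Prod.snd_sub, LinearMap.sub_apply, hatMul_snd_apply]
    simp only [hatMul, map_sub, map_add, LinearMap.sub_apply] at hh hf hg ⊢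
    linear_combination hf - hg - hh
  · simp only [Prod.snd_sub, LinearMap.sub_apply, hatMul_snd_apply]
    simp [sdBracket, Ldual]
    ring
  · simp only [omegaP, hatMul_snd_apply]
    simp [sdBracket, hatMul, Ldual]
    ring
end
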